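/- Let R be a Hecke symmetry with parameter q such that j_q ≠ 0 for 2 ≤ j ≤ m, let M be an N×N matrix with entries in a unital associative ℂ-algebra 𝒜 satisfying the Reflection Equation R M₁ R M₁ = M₁ R M₁ R, and suppose the R-skew-symmetrizer admits a rank-one factorization A^(m) = |u⟩⟨v| with complex tensors u = ‖u_{i₁…i_m}‖, v = ‖v^{j₁…j_m}‖ and normalization ⟨v|u⟩ = 1. Then A^(m) M_{1̄} ⋯ M_{m̄} = A^(m) M_{1̄} ⋯ M_{m̄} A^(m) = A^(m) · (⟨v| M_{1̄} ⋯ M_{m̄} |u⟩), i.e. the matrix A^(m) M_{1̄} ⋯ M_{m̄} equals the complex matrix A^(m) multiplied on the right by the single algebra element ⟨v| M_{1̄} ⋯ M_{m̄} |u⟩ ∈ 𝒜. -/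

import Mathlib

open Matrix BigOperators

noncomputable section

/-- An `N² × N²` complex matrix, viewed as an operator on `ℂ^N ⊗ ℂ^N`. -/
abbrev RMat (N : ℕ) := Matrix (Fin N × Fin N) (Fin N × Fin N) ℂ

/-- A matrix on the `k`-th tensor power of `ℂ^N`, with entries in `A`. -/
abbrev TMat (N k : ℕ) (A : Type _) := Matrix (Fin k → Fin N) (Fin k → Fin N) A

/-- The `q`-number `j_q = (q^j - q^{-j})/(q - q^{-1})`. -/
def qNum (q : ℂ) (j : ℕ) : ℂ := (q ^ j - q⁻¹ ^ j) / (q - q⁻¹)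

/-- Embedding of an `N²×N²` matrix `R` into the `k`-th tensor power,
acting in the (0-based) tensor factors `i` and `i+1`.  The paper's `R_i`
(1-based) is `embR k R (i-1)`. -/
def embR {N : ℕ} (k : ℕ) (R : RMat N) (i : ℕ) : TMat N k ℂ := fun f g =>
  if h : i + 1 < k then
    if ∀ j : Fin k, j.val ≠ i → j.val ≠ i + 1 → f j = g j then
      R (f ⟨i, Nat.lt_of_succ_lt h⟩, f ⟨i + 1, h⟩) (g ⟨i, Nat.lt_of_succ_lt h⟩, g ⟨i + 1, h⟩)
    else 0
  else (1 : TMat N k ℂ) f g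

/-- `X ⊗ I^{⊗(k-1)}` : the first copy `X_{1̄}` of an `N×N` matrix over `A`. -/
def emb1 {N : ℕ} (k : ℕ) {A : Type _} [Ring A] (X : Matrix (Fin N) (Fin N) A) :
    TMat N k A := fun f g =>
  if h : 0 < k then
    if ∀ j : Fin k, j.val ≠ 0 → f j = g j then X (f ⟨0, h⟩) (g ⟨0, h⟩) else 0
  else (1 : TMat N k A) f g

/-- Lift a complex matrix to a matrix over the `ℂ`-algebra `A`. -/
def liftC {N k : ℕ} (A : Type _) [Ring A] [Algebra ℂ A] (X : TMat N k ℂ) : TMat N k A :=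
  X.map (algebraMap ℂ A)

/-- The copies `X_{1̄}, X_{2̄}, …` of `X` in the `k`-th tensor power:
`copyX k R Rinv X i` is the paper's `X_{\overline{i+1}}`, i.e.
`X_{1̄} = X ⊗ I^{⊗(k-1)}` and `X_{\overline{i+1}} = R_i X_{ī} R_i⁻¹`. -/
def copyX {N : ℕ} (k : ℕ) (R Rinv : RMat N) {A : Type _} [Ring A] [Algebra ℂ A]
    (X : Matrix (Fin N) (Fin N) A) : ℕ → TMat N k A
  | 0 => emb1 k X
  | i + 1 => liftC A (embR k R i) * copyX k R Rinv X i * liftC A (embR k Rinv i)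

/-- The `R`-skew-symmetrizers, on the ambient `k`-th tensor power:
`Asym k R q j` is `A^{(j)}` (acting in the first `j` factors). -/
def Asym {N : ℕ} (k : ℕ) (R : RMat N) (q : ℂ) : ℕ → TMat N k ℂ
  | 0 => 1
  | 1 => 1
  | j + 2 =>
      (qNum q (j + 2))⁻¹ •
        (Asym k R q (j + 1) *
          ((q ^ (j + 1)) • (1 : TMat N k ℂ) - (qNum q (j + 1)) • embR k R j) *
          Asym k R q (j + 1))

/-- The `R`-symmetrizers, on the ambient `k`-th tensor power:
`Ssym k R q j` is `S^{(j)}` (acting in the first `j` factors). -/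
def Ssym {N : ℕ} (k : ℕ) (R : RMat N) (q : ℂ) : ℕ → TMat N k ℂ
  | 0 => 1
  | 1 => 1
  | j + 2 =>
      (qNum q (j + 2))⁻¹ •
        (Ssym k R q (j + 1) *
          ((q⁻¹ ^ (j + 1)) • (1 : TMat N k ℂ) + (qNum q (j + 1)) • embR k R j) *
          Ssym k R q (j + 1))

/-- The braid relation `R₁₂ R₂₃ R₁₂ = R₂₃ R₁₂ R₂₃` on `(ℂ^N)^{⊗3}`. -/
def IsBraiding {N : ℕ} (R : RMat N) : Prop :=
  embR 3 R 0 * embR 3 R 1 * embR 3 R 0 = embR 3 R 1 * embR 3 R 0 * embR 3 R 1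

/-- The Hecke condition `(q·I − R)(q⁻¹·I + R) = 0`. -/
def HeckeCond {N : ℕ} (R : RMat N) (q : ℂ) : Prop :=
  (q • (1 : RMat N) - R) * (q⁻¹ • (1 : RMat N) + R) = 0

/-- The Reflection Equation `R M₁ R M₁ = M₁ R M₁ R` (on `(ℂ^N)^{⊗2}`,
with entries in `A`). -/
def RERel {N : ℕ} (R : RMat N) {A : Type _} [Ring A] [Algebra ℂ A]
    (M : Matrix (Fin N) (Fin N) A) : Prop :=
  liftC A (embR 2 R 0) * emb1 2 M * liftC A (embR 2 R 0) * emb1 2 M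
    = emb1 2 M * liftC A (embR 2 R 0) * emb1 2 M * liftC A (embR 2 R 0)

/-- The relation `R⁻¹ D₁ R⁻¹ D₁ = D₁ R⁻¹ D₁ R⁻¹` on the matrix `D`,
where `Rinv = R⁻¹`. -/
def DDRel {N : ℕ} (Rinv : RMat N) {A : Type _} [Ring A] [Algebra ℂ A]
    (D : Matrix (Fin N) (Fin N) A) : Prop :=
  liftC A (embR 2 Rinv 0) * emb1 2 D * liftC A (embR 2 Rinv 0) * emb1 2 D
    = emb1 2 D * liftC A (embR 2 Rinv 0) * emb1 2 D * liftC A (embR 2 Rinv 0)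

/-- The permutation relations `D₁ R M₁ = R M₁ R⁻¹ D₁ R⁻¹ + I`, where `Rinv = R⁻¹`. -/
def PermRel {N : ℕ} (R Rinv : RMat N) {A : Type _} [Ring A] [Algebra ℂ A]
    (M D : Matrix (Fin N) (Fin N) A) : Prop :=
  emb1 2 D * liftC A (embR 2 R 0) * emb1 2 M
    = liftC A (embR 2 R 0) * emb1 2 M * liftC A (embR 2 Rinv 0) * emb1 2 D *
        liftC A (embR 2 Rinv 0) + 1

/-- `Ψ` is the skew-inverse of `R`:  `Σ_{j,b} R^{ij}_{ab} Ψ^{bc}_{jd} = δ^i_d δ^c_a`. -/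
def SkewInv {N : ℕ} (R Ψ : RMat N) : Prop :=
  ∀ i a c d : Fin N,
    (∑ j : Fin N, ∑ b : Fin N, R (i, j) (a, b) * Ψ (b, c) (j, d))
      = if i = d ∧ c = a then 1 else 0

/-- The matrix `C`, `C^c_d = Σ_i Ψ^{ic}_{id}`. -/
def Cmat {N : ℕ} (Ψ : RMat N) : Matrix (Fin N) (Fin N) ℂ :=
  fun c d => ∑ i : Fin N, Ψ (i, c) (i, d)

/-- The `R`-trace over all `k` tensor factors: `⟨X⟩_{1…k} = Tr(C^{⊗k} X)`. -/
def rTr {N k : ℕ} {A : Type _} [Ring A] [Algebra ℂ A] (C : Matrix (Fin N) (Fin N) ℂ)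
    (X : TMat N k A) : A :=
  ∑ f : Fin k → Fin N, ∑ g : Fin k → Fin N, (∏ j : Fin k, C (f j) (g j)) • X g f

/-- The chain `X_{1̄} X_{2̄} ⋯ X_{n̄}`. -/
def upChain {N : ℕ} (k : ℕ) (R Rinv : RMat N) {A : Type _} [Ring A] [Algebra ℂ A]
    (X : Matrix (Fin N) (Fin N) A) (n : ℕ) : TMat N k A :=
  ((List.range n).map (copyX k R Rinv X)).prod

/-- The reversed chain `X_{n̄} X_{\overline{n-1}} ⋯ X_{1̄}`. -/
def downChain {N : ℕ} (k : ℕ) (R Rinv : RMat N) {A : Type _} [Ring A] [Algebra ℂ A]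
    (X : Matrix (Fin N) (Fin N) A) (n : ℕ) : TMat N k A :=
  ((List.range n).reverse.map (copyX k R Rinv X)).prod

/-- The Capelli chain `L_{1̄}(L_{2̄} + q·1_q I)(L_{3̄} + q²·2_q I) ⋯ (L_{n̄} + q^{n-1}·(n-1)_q I)`
(note `0_q = 0`). -/
def capChainA {N : ℕ} (k : ℕ) (R Rinv : RMat N) (q : ℂ) {A : Type _} [Ring A] [Algebra ℂ A]
    (L : Matrix (Fin N) (Fin N) A) (n : ℕ) : TMat N k A :=
  ((List.range n).map
    (fun i => copyX k R Rinv L i + ((q ^ i) * qNum q i) • (1 : TMat N k A))).prod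

/-- The symmetric Capelli chain
`L_{1̄}(L_{2̄} - q⁻¹·1_q I) ⋯ (L_{n̄} - q^{-(n-1)}·(n-1)_q I)`. -/
def capChainS {N : ℕ} (k : ℕ) (R Rinv : RMat N) (q : ℂ) {A : Type _} [Ring A] [Algebra ℂ A]
    (L : Matrix (Fin N) (Fin N) A) (n : ℕ) : TMat N k A :=
  ((List.range n).map
    (fun i => copyX k R Rinv L i - ((q⁻¹ ^ i) * qNum q i) • (1 : TMat N k A))).prod

/-- The descending chain `R_{a→b} = R_a R_{a-1} ⋯ R_b` (1-based indices;
identity when `b > a`). -/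
def rChainDesc {N : ℕ} (k : ℕ) (R : RMat N) (a b : ℕ) : TMat N k ℂ :=
  ((List.range' b (a + 1 - b)).reverse.map (fun j => embR k R (j - 1))).prod

/-- The ascending chain `R_{b→a} = R_b R_{b+1} ⋯ R_a` (1-based indices;
identity when `b > a`). -/
def rChainAsc {N : ℕ} (k : ℕ) (R : RMat N) (b a : ℕ) : TMat N k ℂ :=
  ((List.range' b (a + 1 - b)).map (fun j => embR k R (j - 1))).prod

/-! ### Abstract word computations -/

theorem aux_commute_inv {B : Type*} [Monoid B] {x r s : B} (h : Commute x r)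
    (h1 : r * s = 1) (h2 : s * r = 1) : Commute x s := by
  show x * s = s * x
  calc x * s = (s * r) * x * s := by rw [h2, one_mul]
    _ = s * (r * x) * s := by simp only [mul_assoc]
    _ = s * (x * r) * s := by rw [h.eq]
    _ = s * x * (r * s) := by simp only [mul_assoc]
    _ = s * x := by rw [h1, mul_one]

theorem aux_b1 {B : Type*} [Monoid B] {r s r' s' : B} (h2 : s * r = 1) (h1' : r' * s' = 1)
    (hb : r * r' * r = r' * r * r') : s * r' * r = r' * r * s' := by
  calc s * r' * r = s * (r' * r * (r' * s')) := by rw [h1', mul_one, mul_assoc]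
    _ = s * (r' * r * r') * s' := by simp only [mul_assoc]
    _ = s * (r * r' * r) * s' := by rw [hb]
    _ = (s * r) * (r' * r * s') := by simp only [mul_assoc]
    _ = r' * r * s' := by rw [h2, one_mul]

theorem aux_b2 {B : Type*} [Monoid B] {r s r' s' : B} (h1 : r * s = 1) (h2 : s * r = 1)
    (h1' : r' * s' = 1) (h2' : s' * r' = 1)
    (hb : r * r' * r = r' * r * r') : r' * s * s' = s * s' * r := by
  have h : r' * r * (r' * s * s') = r := by
    calc r' * r * (r' * s * s') = (r' * r * r') * s * s' := by simp only [mul_assoc]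
      _ = (r * r' * r) * s * s' := by rw [hb]
      _ = r * (r' * ((r * s) * s')) := by simp only [mul_assoc]
      _ = r := by rw [h1, one_mul, h1', mul_one]
  calc r' * s * s' = s * ((s' * r') * r) * (r' * s * s') := by rw [h2', one_mul, h2, one_mul]
    _ = s * s' * (r' * r * (r' * s * s')) := by simp only [mul_assoc]
    _ = s * s' * r := by rw [h]

section Words

variable {B : Type*} [Monoid B] (m : ℕ) (r s c : ℕ → B)

theorem aux_low
    (hrs : ∀ i, i + 1 < m → r i * s i = 1) (hsr : ∀ i, i + 1 < m → s i * r i = 1)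
    (hfar : ∀ i j, i + 1 < j → j + 1 < m → Commute (r i) (r j))
    (hc : ∀ i, c (i + 1) = r i * c i * s i)
    (h0 : ∀ i, 1 ≤ i → i + 1 < m → Commute (r i) (c 0))
    (i k : ℕ) (hk : k < i) (hi : i + 1 < m) : Commute (r i) (c k) := by
  induction k with
  | zero => exact h0 i hk hi
  | succ k ih =>
    rw [hc]
    have h1 : Commute (r i) (r k) := (hfar k i (by omega) hi).symm
    exact (h1.mul_right (ih (by omega))).mul_right
      (aux_commute_inv h1 (hrs k (by omega)) (hsr k (by omega)))

theorem aux_high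
    (hrs : ∀ i, i + 1 < m → r i * s i = 1) (hsr : ∀ i, i + 1 < m → s i * r i = 1)
    (hbr : ∀ i, i + 2 < m → r i * r (i + 1) * r i = r (i + 1) * r i * r (i + 1))
    (hfar : ∀ i j, i + 1 < j → j + 1 < m → Commute (r i) (r j))
    (hc : ∀ i, c (i + 1) = r i * c i * s i)
    (h0 : ∀ i, 1 ≤ i → i + 1 < m → Commute (r i) (c 0))
    (i k : ℕ) (hk : i + 2 ≤ k) (hi : k < m) : Commute (r i) (c k) := by
  induction k, hk using Nat.le_induction with
  | base =>
    have hl := aux_low m r s c hrs hsr hfar hc h0 (i + 1) i (by omega) (by omega)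
    have hb2 := aux_b2 (hrs i (by omega)) (hsr i (by omega)) (hrs (i + 1) (by omega))
      (hsr (i + 1) (by omega)) (hbr i (by omega))
    show r i * c (i + 1 + 1) = c (i + 1 + 1) * r i
    rw [hc (i + 1), hc i]
    calc r i * (r (i + 1) * (r i * c i * s i) * s (i + 1))
        = (r i * r (i + 1) * r i) * c i * s i * s (i + 1) := by simp only [mul_assoc]
      _ = (r (i + 1) * r i * r (i + 1)) * c i * s i * s (i + 1) := by rw [hbr i (by omega)]
      _ = r (i + 1) * r i * (r (i + 1) * c i) * s i * s (i + 1) := by simp only [mul_assoc]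
      _ = r (i + 1) * r i * (c i * r (i + 1)) * s i * s (i + 1) := by rw [hl.eq]
      _ = r (i + 1) * r i * c i * (r (i + 1) * s i * s (i + 1)) := by simp only [mul_assoc]
      _ = r (i + 1) * r i * c i * (s i * s (i + 1) * r i) := by rw [hb2]
      _ = _ := by simp only [mul_assoc]
  | succ k hk ih =>
    rw [hc]
    have h1 : Commute (r i) (r k) := hfar i k (by omega) (by omega)
    exact (h1.mul_right (ih (by omega))).mul_right
      (aux_commute_inv h1 (hrs k (by omega)) (hsr k (by omega)))

theorem aux_refl
    (hrs : ∀ i, i + 1 < m → r i * s i = 1) (hsr : ∀ i, i + 1 < m → s i * r i = 1)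
    (hbr : ∀ i, i + 2 < m → r i * r (i + 1) * r i = r (i + 1) * r i * r (i + 1))
    (hfar : ∀ i j, i + 1 < j → j + 1 < m → Commute (r i) (r j))
    (hc : ∀ i, c (i + 1) = r i * c i * s i)
    (h0 : ∀ i, 1 ≤ i → i + 1 < m → Commute (r i) (c 0))
    (hre : 1 < m → r 0 * c 0 * r 0 * c 0 = c 0 * r 0 * c 0 * r 0)
    (i : ℕ) (hi : i + 1 < m) : r i * c i * r i * c i = c i * r i * c i * r i := by
  induction i with
  | zero => exact hre (by omega)
  | succ i ih =>
    have ih := ih (by omega)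
    have hl := aux_low m r s c hrs hsr hfar hc h0 (i + 1) i (by omega) (by omega)
    have hb := hbr i (by omega)
    have hb1 := aux_b1 (hsr i (by omega)) (hrs (i + 1) (by omega)) hb
    have hls := aux_commute_inv hl.symm (hrs (i + 1) (by omega)) (hsr (i + 1) (by omega))
    have h1 := hrs i (by omega)
    have h2 := hsr i (by omega)
    have h1' := hrs (i + 1) (by omega)
    have h2' := hsr (i + 1) (by omega)
    have hx : s (i + 1) * s i * r (i + 1) = r i * s (i + 1) * s i := by
      calc s (i + 1) * s i * r (i + 1)
          = s (i + 1) * (s i * r (i + 1) * (r i * s i)) := by rw [h1, mul_one, mul_assoc]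
        _ = s (i + 1) * (s i * r (i + 1) * r i) * s i := by simp only [mul_assoc]
        _ = s (i + 1) * (r (i + 1) * r i * s (i + 1)) * s i := by rw [hb1]
        _ = (s (i + 1) * r (i + 1)) * (r i * s (i + 1) * s i) := by simp only [mul_assoc]
        _ = _ := by rw [h2', one_mul]
    rw [hc i]
    generalize r i = a at *
    generalize r (i + 1) = b at *
    generalize s i = a' at *
    generalize s (i + 1) = b' at *
    generalize c i = x at *
    have L : b * (a * x * a') * b * (a * x * a') = a * x * b * a * x * a * b' * a' := by
      calc b * (a * x * a') * b * (a * x * a') = b * a * x * (a' * b * a) * x * a' := by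
            simp only [mul_assoc]
        _ = b * a * x * (b * a * b') * x * a' := by rw [hb1]
        _ = b * a * (b * x) * a * (x * b') * a' := by rw [hl.eq, hls.eq]; simp only [mul_assoc]
        _ = (a * b * a) * x * a * x * b' * a' := by rw [hb]; simp only [mul_assoc]
        _ = a * b * (a * x * a * x) * b' * a' := by simp only [mul_assoc]
        _ = a * (b * x) * a * x * a * b' * a' := by rw [ih]; simp only [mul_assoc]
        _ = _ := by rw [hl.eq]; simp only [mul_assoc]
    rw [L]
    symm
    calc (a * x * a') * b * (a * x * a') * b = a * x * (a' * b * a) * x * a' * b := by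
            simp only [mul_assoc]
      _ = a * x * b * a * (b' * x) * a' * b := by rw [hb1]; simp only [mul_assoc]
      _ = a * x * b * a * x * (b' * a' * b) := by rw [← hls.eq]; simp only [mul_assoc]
      _ = _ := by rw [hx]; simp only [mul_assoc]

theorem aux_chain
    (hrs : ∀ i, i + 1 < m → r i * s i = 1) (hsr : ∀ i, i + 1 < m → s i * r i = 1)
    (hbr : ∀ i, i + 2 < m → r i * r (i + 1) * r i = r (i + 1) * r i * r (i + 1))
    (hfar : ∀ i j, i + 1 < j → j + 1 < m → Commute (r i) (r j))
    (hc : ∀ i, c (i + 1) = r i * c i * s i)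
    (h0 : ∀ i, 1 ≤ i → i + 1 < m → Commute (r i) (c 0))
    (hre : 1 < m → r 0 * c 0 * r 0 * c 0 = c 0 * r 0 * c 0 * r 0)
    (i : ℕ) (hi : i + 1 < m) : Commute (r i) ((List.range m).map c).prod := by
  have hs : ∀ n, ((List.range (n + 1)).map c).prod = ((List.range n).map c).prod * c n := by
    intro n; simp [List.range_succ]
  have hA : ∀ n, n ≤ i → Commute (r i) ((List.range n).map c).prod := by
    intro n
    induction n with
    | zero => intro _; simp
    | succ n ih =>
      intro hn
      rw [hs]
      exact (ih (by omega)).mul_right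
        (aux_low m r s c hrs hsr hfar hc h0 i n (by omega) hi)
  have hB : ∀ n, i + 2 ≤ n → n ≤ m → Commute (r i) ((List.range n).map c).prod := by
    intro n hn
    induction n, hn using Nat.le_induction with
    | base =>
      intro _
      rw [hs (i + 1), hs i, mul_assoc]
      refine (hA i le_rfl).mul_right ?_
      have h := aux_refl m r s c hrs hsr hbr hfar hc h0 hre i hi
      have h1 := hrs i hi
      have h2 := hsr i hi
      rw [hc]
      show r i * (c i * (r i * c i * s i)) = c i * (r i * c i * s i) * r i
      calc r i * (c i * (r i * c i * s i)) = (r i * c i * r i * c i) * s i := by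
            simp only [mul_assoc]
        _ = c i * r i * c i * (r i * s i) := by rw [h]; simp only [mul_assoc]
        _ = c i * r i * c i * (s i * r i) := by rw [h1, h2]
        _ = _ := by simp only [mul_assoc]
    | succ n hn ih =>
      intro hm
      rw [hs]
      exact (ih (by omega)).mul_right
        (aux_high m r s c hrs hsr hbr hfar hc h0 i n hn (by omega))
  exact hB m (by omega) le_rfl

end Words

/-! ### Local embeddings of tensor matrices -/

open Classical in
/-- Embedding of a matrix on `p` tensor factors into `k` factors along `e`. -/
def locE {N p k : ℕ} {A : Type _} [Ring A] (e : Fin p → Fin k) (X : TMat N p A) : TMat N k A :=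
  fun f g => if ∀ j, j ∉ Set.range e → f j = g j then X (f ∘ e) (g ∘ e) else 0

theorem locE_mul {N p k : ℕ} {A : Type _} [Ring A] (e : Fin p → Fin k)
    (he : Function.Injective e) (X Y : TMat N p A) :
    locE e (X * Y) = locE e X * locE e Y := by
  classical
  ext f g
  rw [Matrix.mul_apply]
  by_cases hfg : ∀ j, j ∉ Set.range e → f j = g j
  · have hL : locE e (X * Y) f g = ∑ a, X (f ∘ e) a * Y a (g ∘ e) := by
      simp only [locE, if_pos hfg, Matrix.mul_apply]
    rw [hL]
    have hR : ∀ h, locE e X f h * locE e Y h g =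
        if (∀ j, j ∉ Set.range e → f j = h j) then X (f ∘ e) (h ∘ e) * Y (h ∘ e) (g ∘ e)
        else 0 := by
      intro h
      by_cases hh : ∀ j, j ∉ Set.range e → f j = h j
      · have hh' : ∀ j, j ∉ Set.range e → h j = g j := fun j hj => (hh j hj).symm.trans (hfg j hj)
        simp only [locE, if_pos hh, if_pos hh']
      · simp only [locE, if_neg hh, zero_mul]
    rw [Finset.sum_congr rfl (fun h _ => hR h), ← Finset.sum_filter]
    refine Finset.sum_nbij' (fun a => Function.extend e a f) (fun h => h ∘ e) ?_ ?_ ?_ ?_ ?_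
    · intro a _
      simp only [Finset.mem_filter, Finset.mem_univ, true_and]
      intro j hj
      exact (Function.extend_apply' a f j (fun ⟨x, hx⟩ => hj ⟨x, hx⟩)).symm
    · intro a _; exact Finset.mem_univ _
    · intro a _
      exact funext fun x => he.extend_apply a f x
    · intro h hh
      simp only [Finset.mem_filter, Finset.mem_univ, true_and] at hh
      funext j
      by_cases hj : j ∈ Set.range e
      · obtain ⟨x, rfl⟩ := hj
        simp [he.extend_apply]
      · rw [Function.extend_apply' _ _ _ (fun ⟨x, hx⟩ => hj ⟨x, hx⟩)]
        exact hh j hj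
    · intro a _
      rw [show Function.extend e a f ∘ e = a from funext fun x => he.extend_apply a f x]
  · have hL : locE e (X * Y) f g = 0 := by simp only [locE, if_neg hfg]
    rw [hL]
    symm
    refine Finset.sum_eq_zero fun h _ => ?_
    by_cases hh : ∀ j, j ∉ Set.range e → f j = h j
    · have hh' : ¬ ∀ j, j ∉ Set.range e → h j = g j := fun h' =>
        hfg fun j hj => (hh j hj).trans (h' j hj)
      simp only [locE, if_neg hh', mul_zero]
    · simp only [locE, if_neg hh, zero_mul]

theorem locE_one {N p k : ℕ} {A : Type _} [Ring A] (e : Fin p → Fin k) :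
    locE e (1 : TMat N p A) = 1 := by
  classical
  ext f g
  by_cases hfg : f = g
  · subst hfg; simp [locE]
  · rw [Matrix.one_apply_ne hfg]
    by_cases h : ∀ j, j ∉ Set.range e → f j = g j
    · have : f ∘ e ≠ g ∘ e := by
        intro h'
        apply hfg
        funext j
        by_cases hj : j ∈ Set.range e
        · obtain ⟨x, rfl⟩ := hj
          exact congrFun h' x
        · exact h j hj
      simp only [locE, if_pos h, Matrix.one_apply_ne this]
    · simp only [locE, if_neg h]

theorem locE_mul_disj {N p p' k : ℕ} {A : Type _} [Ring A] (e : Fin p → Fin k)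
    (e' : Fin p' → Fin k) (hd : ∀ x y, e x ≠ e' y) (X : TMat N p A) (Y : TMat N p' A)
    (f g : Fin k → Fin N) [Decidable (∀ j, j ∉ Set.range e → j ∉ Set.range e' → f j = g j)] :
    (locE e X * locE e' Y) f g =
      if ∀ j, j ∉ Set.range e → j ∉ Set.range e' → f j = g j then
        X (f ∘ e) (g ∘ e) * Y (f ∘ e') (g ∘ e') else 0 := by
  classical
  rw [Matrix.mul_apply]
  have hdis : ∀ j, j ∈ Set.range e → j ∉ Set.range e' := by
    rintro _ ⟨x, rfl⟩ ⟨y, hy⟩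
    exact hd x y hy.symm
  let h₀ : Fin k → Fin N := fun j => if j ∈ Set.range e then g j else f j
  rw [Finset.sum_eq_single h₀]
  · have h1 : ∀ j, j ∉ Set.range e → f j = h₀ j := fun j hj => by simp only [h₀, if_neg hj]
    have h2 : (∀ j, j ∉ Set.range e' → h₀ j = g j) ↔
        (∀ j, j ∉ Set.range e → j ∉ Set.range e' → f j = g j) := by
      constructor
      · intro h j hj hj'
        rw [h1 j hj]; exact h j hj'
      · intro h j hj'
        by_cases hj : j ∈ Set.range e
        · simp only [h₀, if_pos hj]
        · rw [← h1 j hj]; exact h j hj hj'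
    have h3 : h₀ ∘ e = g ∘ e := by
      funext x
      have : e x ∈ Set.range e := ⟨x, rfl⟩
      simp only [Function.comp, h₀, if_pos this]
    have h4 : h₀ ∘ e' = f ∘ e' := by
      funext x
      exact (h1 _ (fun hx => hdis _ hx ⟨x, rfl⟩)).symm
    simp only [locE, if_pos h1, h3, h4]
    by_cases h5 : ∀ j, j ∉ Set.range e → j ∉ Set.range e' → f j = g j
    · rw [if_pos h5, if_pos (h2.2 h5)]
    · rw [if_neg h5, if_neg (fun h => h5 (h2.1 h)), mul_zero]
  · intro h _ hne
    by_cases h1 : ∀ j, j ∉ Set.range e → f j = h j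
    · have h2 : ¬ ∀ j, j ∉ Set.range e' → h j = g j := by
        intro h2
        apply hne
        funext j
        by_cases hj : j ∈ Set.range e
        · simp only [h₀, if_pos hj]; exact h2 j (hdis j hj)
        · simp only [h₀, if_neg hj]; exact (h1 j hj).symm
      simp only [locE, if_neg h2, mul_zero]
    · simp only [locE, if_neg h1, zero_mul]
  · intro h; exact absurd (Finset.mem_univ _) h

theorem locE_commute {N p p' k : ℕ} {A : Type _} [Ring A] (e : Fin p → Fin k)
    (e' : Fin p' → Fin k) (hd : ∀ x y, e x ≠ e' y) (X : TMat N p A) (Y : TMat N p' A)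
    (hXY : ∀ a b c d, Commute (X a b) (Y c d)) :
    Commute (locE e X) (locE e' Y) := by
  classical
  show locE e X * locE e' Y = locE e' Y * locE e X
  ext f g
  rw [locE_mul_disj e e' hd, locE_mul_disj e' e (fun x y => (hd y x).symm)]
  by_cases h : ∀ j, j ∉ Set.range e → j ∉ Set.range e' → f j = g j
  · rw [if_pos h, if_pos (fun j h1 h2 => h j h2 h1), (hXY _ _ _ _).eq]
  · rw [if_neg h, if_neg (fun h' => h (fun j h1 h2 => h' j h2 h1))]

/-! ### The frozen embeddings as local embeddings -/

theorem liftC_mul {N k : ℕ} (A : Type _) [Ring A] [Algebra ℂ A] (X Y : TMat N k ℂ) :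
    liftC A (X * Y) = liftC A X * liftC A Y := Matrix.map_mul

theorem liftC_one {N k : ℕ} (A : Type _) [Ring A] [Algebra ℂ A] :
    liftC A (1 : TMat N k ℂ) = 1 := by
  simp [liftC]

theorem liftC_smul {N k : ℕ} (A : Type _) [Ring A] [Algebra ℂ A] (z : ℂ) (X : TMat N k ℂ) :
    liftC A (z • X) = z • liftC A X := by
  ext f g
  simp only [liftC, Matrix.map_apply, Matrix.smul_apply, smul_eq_mul, map_mul]
  rw [Algebra.smul_def]

theorem liftC_sub {N k : ℕ} (A : Type _) [Ring A] [Algebra ℂ A] (X Y : TMat N k ℂ) :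
    liftC A (X - Y) = liftC A X - liftC A Y := by
  ext f g
  simp [liftC]

theorem liftC_locE {N p k : ℕ} (A : Type _) [Ring A] [Algebra ℂ A] (e : Fin p → Fin k)
    (X : TMat N p ℂ) : liftC A (locE e X) = locE e (liftC A X) := by
  classical
  ext f g
  simp only [liftC, Matrix.map_apply, locE]
  split_ifs <;> simp

/-- The positions `i, i+1, …, i+p-1`. -/
def pos {k : ℕ} (p i : ℕ) (h : i + p ≤ k) : Fin p → Fin k := fun x => ⟨i + x.val, by omega⟩

theorem pos_inj {k : ℕ} (p i : ℕ) (h : i + p ≤ k) : Function.Injective (pos p i h) := by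
  intro x y hxy
  have := congrArg Fin.val hxy
  simp only [pos] at this
  exact Fin.ext (by omega)

theorem mem_range_pos {k : ℕ} (p i : ℕ) (h : i + p ≤ k) (j : Fin k) :
    j ∈ Set.range (pos p i h) ↔ i ≤ j.val ∧ j.val < i + p := by
  constructor
  · rintro ⟨x, rfl⟩
    simp only [pos]
    omega
  · rintro ⟨h1, h2⟩
    exact ⟨⟨j.val - i, by omega⟩, Fin.ext (by simp only [pos]; omega)⟩

theorem embR_eq {N k p : ℕ} (R : RMat N) (i j : ℕ) (h : i + p ≤ k) (hj : j + 1 < p) :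
    embR k R (i + j) = locE (pos p i h) (embR p R j) := by
  classical
  ext f g
  have hk : i + j + 1 < k := by omega
  simp only [embR, locE, dif_pos hk, dif_pos hj]
  by_cases hc : ∀ l : Fin k, l.val ≠ i + j → l.val ≠ i + j + 1 → f l = g l
  · have h1 : ∀ l, l ∉ Set.range (pos p i h) → f l = g l := by
      intro l hl
      rw [mem_range_pos] at hl
      exact hc l (by omega) (by omega)
    have h2 : ∀ l : Fin p, l.val ≠ j → l.val ≠ j + 1 →
        (f ∘ pos p i h) l = (g ∘ pos p i h) l := by
      intro l h3 h4
      exact hc _ (by simp only [pos]; omega) (by simp only [pos]; omega)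
    rw [if_pos hc, if_pos h1, if_pos h2]
    rfl
  · rw [if_neg hc]
    by_cases h1 : ∀ l, l ∉ Set.range (pos p i h) → f l = g l
    · rw [if_pos h1, if_neg]
      intro h2
      apply hc
      intro l h3 h4
      by_cases hl : l ∈ Set.range (pos p i h)
      · obtain ⟨x, rfl⟩ := hl
        simp only [pos] at h3 h4
        exact h2 x (by omega) (by omega)
      · exact h1 l hl
    · rw [if_neg h1]

theorem emb1_eq {N k p : ℕ} {A : Type _} [Ring A] (X : Matrix (Fin N) (Fin N) A)
    (h : 0 + p ≤ k) (hp : 0 < p) :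
    emb1 k X = locE (pos p 0 h) (emb1 p X) := by
  classical
  ext f g
  have hk : 0 < k := by omega
  simp only [emb1, locE, dif_pos hk, dif_pos hp]
  by_cases hc : ∀ l : Fin k, l.val ≠ 0 → f l = g l
  · have h1 : ∀ l, l ∉ Set.range (pos p 0 h) → f l = g l := by
      intro l hl
      rw [mem_range_pos] at hl
      exact hc l (by omega)
    have h2 : ∀ l : Fin p, l.val ≠ 0 →
        (f ∘ pos p 0 h) l = (g ∘ pos p 0 h) l := by
      intro l h3
      exact hc _ (by simp only [pos]; omega)
    rw [if_pos hc, if_pos h1, if_pos h2]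
    rfl
  · rw [if_neg hc]
    by_cases h1 : ∀ l, l ∉ Set.range (pos p 0 h) → f l = g l
    · rw [if_pos h1, if_neg]
      intro h2
      apply hc
      intro l h3
      by_cases hl : l ∈ Set.range (pos p 0 h)
      · obtain ⟨x, rfl⟩ := hl
        simp only [pos] at h3
        exact h2 x (by omega)
      · exact h1 l hl
    · rw [if_neg h1]

theorem embR_two {N : ℕ} (R : RMat N) :
    embR 2 R 0 = R.submatrix (finTwoArrowEquiv (Fin N)) (finTwoArrowEquiv (Fin N)) := by
  ext f g
  have h1 : ∀ j : Fin 2, j.val ≠ 0 → j.val ≠ 0 + 1 → f j = g j := by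
    intro j h1 h2; omega
  simp only [embR, dif_pos (show 0 + 1 < 2 by omega), if_pos h1]
  rfl

theorem embR_inv {N k : ℕ} (R S : RMat N) (h : R * S = 1) (i : ℕ) (hi : i + 1 < k) :
    embR k R i * embR k S i = 1 := by
  have e1 := embR_eq R i 0 (p := 2) (k := k) (by omega) (by omega)
  have e2 := embR_eq S i 0 (p := 2) (k := k) (by omega) (by omega)
  rw [Nat.add_zero] at e1 e2
  rw [e1, e2, ← locE_mul _ (pos_inj _ _ _), embR_two, embR_two, Matrix.submatrix_mul_equiv, h,
    Matrix.submatrix_one_equiv, locE_one]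

theorem embR_braid {N k : ℕ} (R : RMat N) (h : IsBraiding R) (i : ℕ) (hi : i + 2 < k) :
    embR k R i * embR k R (i + 1) * embR k R i
      = embR k R (i + 1) * embR k R i * embR k R (i + 1) := by
  have e1 := embR_eq R i 0 (p := 3) (k := k) (by omega) (by omega)
  have e2 := embR_eq R i 1 (p := 3) (k := k) (by omega) (by omega)
  rw [Nat.add_zero] at e1
  rw [e1, e2]
  simp only [← locE_mul _ (pos_inj _ _ _)]
  rw [h]

theorem embR_far {N k : ℕ} (R : RMat N) (i j : ℕ) (hij : i + 1 < j) (hj : j + 1 < k) :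
    Commute (embR k R i) (embR k R j) := by
  have e1 := embR_eq R i 0 (p := 2) (k := k) (by omega) (by omega)
  have e2 := embR_eq R j 0 (p := 2) (k := k) (by omega) (by omega)
  rw [Nat.add_zero] at e1 e2
  rw [e1, e2]
  refine locE_commute _ _ ?_ _ _ (fun _ _ _ _ => Commute.all _ _)
  intro x y hxy
  have := congrArg Fin.val hxy
  simp only [pos] at this
  omega

theorem embR_emb1 {N k : ℕ} (R : RMat N) {A : Type _} [Ring A] [Algebra ℂ A]
    (M : Matrix (Fin N) (Fin N) A) (i : ℕ) (h1 : 1 ≤ i) (hi : i + 1 < k) :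
    Commute (liftC A (embR k R i)) (emb1 k M) := by
  have e1 := embR_eq R i 0 (p := 2) (k := k) (by omega) (by omega)
  have e2 := emb1_eq M (p := 1) (k := k) (by omega) (by omega)
  rw [Nat.add_zero] at e1
  rw [e1, e2, liftC_locE]
  refine locE_commute _ _ ?_ _ _ (fun _ _ _ _ => Algebra.commutes _ _)
  intro x y hxy
  have := congrArg Fin.val hxy
  simp only [pos] at this
  omega

theorem RE_emb {N k : ℕ} (R : RMat N) {A : Type _} [Ring A] [Algebra ℂ A]
    (M : Matrix (Fin N) (Fin N) A) (hRE : RERel R M) (hk : 1 < k) :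
    liftC A (embR k R 0) * emb1 k M * liftC A (embR k R 0) * emb1 k M
    = emb1 k M * liftC A (embR k R 0) * emb1 k M * liftC A (embR k R 0) := by
  have e1 := embR_eq R 0 0 (p := 2) (k := k) (by omega) (by omega)
  have e2 := emb1_eq M (p := 2) (k := k) (by omega) (by omega)
  rw [Nat.add_zero] at e1
  rw [e1, e2, liftC_locE]
  simp only [← locE_mul _ (pos_inj _ _ _)]
  rw [hRE]

theorem embR_upChain {N m : ℕ} (R Rinv : RMat N)
    (hinv : R * Rinv = 1) (hinv' : Rinv * R = 1) (hbr : IsBraiding R)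
    {A : Type _} [Ring A] [Algebra ℂ A]
    (M : Matrix (Fin N) (Fin N) A) (hRE : RERel R M) (i : ℕ) (hi : i + 1 < m) :
    Commute (liftC A (embR m R i)) (upChain m R Rinv M m) := by
  refine aux_chain m (fun i => liftC A (embR m R i)) (fun i => liftC A (embR m Rinv i))
    (copyX m R Rinv M) ?_ ?_ ?_ ?_ ?_ ?_ ?_ i hi
  · intro i hi
    rw [← liftC_mul, embR_inv R Rinv hinv i hi, liftC_one]
  · intro i hi
    rw [← liftC_mul, embR_inv Rinv R hinv' i hi, liftC_one]
  · intro i hi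
    simp only [← liftC_mul]
    rw [embR_braid R hbr i hi]
  · intro i j hij hj
    show liftC A _ * liftC A _ = liftC A _ * liftC A _
    rw [← liftC_mul, ← liftC_mul, (embR_far R i j hij hj).eq]
  · intro i; rfl
  · intro i h1 hi
    exact embR_emb1 R M i h1 hi
  · intro h
    exact RE_emb R M hRE h

theorem Asym_upChain {N m : ℕ} (R Rinv : RMat N) (q : ℂ)
    (hinv : R * Rinv = 1) (hinv' : Rinv * R = 1) (hbr : IsBraiding R)
    {A : Type _} [Ring A] [Algebra ℂ A]
    (M : Matrix (Fin N) (Fin N) A) (hRE : RERel R M) (n : ℕ) (hn : n ≤ m) :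
    Commute (liftC A (Asym m R q n)) (upChain m R Rinv M m) := by
  induction n with
  | zero => simp only [Asym, liftC_one]; exact Commute.one_left _
  | succ n ih =>
    cases n with
    | zero => simp only [Asym, liftC_one]; exact Commute.one_left _
    | succ n =>
      have ih := ih (by omega)
      have hR := embR_upChain (m := m) R Rinv hinv hinv' hbr M hRE n (by omega)
      simp only [Asym, liftC_smul, liftC_mul, liftC_sub, liftC_one]
      exact ((ih.mul_left (((Commute.one_left _).smul_left _).sub_left
        (hR.smul_left _))).mul_left ih).smul_left _

/-- if `A^(m) = |u⟩⟨v|` with `⟨v|u⟩ = 1`, then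
`A^(m) M_{1̄}⋯M_{m̄} = A^(m) M_{1̄}⋯M_{m̄} A^(m) = A^(m) · ⟨v|M_{1̄}⋯M_{m̄}|u⟩`,
the last factor being a single element of `𝒜`. -/
theorem statement15 {N m : ℕ} (R Rinv : RMat N) (q : ℂ)
    (hq0 : q ≠ 0) (hq1 : q ≠ 1) (hqm1 : q ≠ -1)
    (hinv : R * Rinv = 1) (hinv' : Rinv * R = 1)
    (hbr : IsBraiding R) (hH : HeckeCond R q)
    (hqm : ∀ j : ℕ, 2 ≤ j → j ≤ m → qNum q j ≠ 0)
    {A : Type _} [Ring A] [Algebra ℂ A]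
    (M : Matrix (Fin N) (Fin N) A) (hRE : RERel R M)
    (u v : (Fin m → Fin N) → ℂ)
    (hA : ∀ f g : Fin m → Fin N, Asym m R q m f g = u f * v g)
    (hnorm : (∑ f : Fin m → Fin N, v f * u f) = 1) :
    liftC A (Asym m R q m) * upChain m R Rinv M m
        = liftC A (Asym m R q m) * upChain m R Rinv M m * liftC A (Asym m R q m) ∧
    liftC A (Asym m R q m) * upChain m R Rinv M m
        = liftC A (Asym m R q m) *
            ((∑ f : Fin m → Fin N, ∑ g : Fin m → Fin N,
                (v f * u g) • upChain m R Rinv M m f g) • (1 : TMat N m A)) := by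
  have hcom := Asym_upChain R Rinv q hinv hinv' hbr M hRE m le_rfl
  have hidem : Asym m R q m * Asym m R q m = Asym m R q m := by
    ext f g
    rw [Matrix.mul_apply]
    simp only [hA]
    calc ∑ h, u f * v h * (u h * v g) = (u f * v g) * ∑ h, v h * u h := by
          rw [Finset.mul_sum]
          exact Finset.sum_congr rfl fun h _ => by ring
      _ = u f * v g := by rw [hnorm, mul_one]
  have h1 : liftC A (Asym m R q m) * upChain m R Rinv M m
        = liftC A (Asym m R q m) * upChain m R Rinv M m * liftC A (Asym m R q m) := by
    rw [mul_assoc, ← hcom.eq, ← mul_assoc, ← liftC_mul, hidem]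
  refine ⟨h1, ?_⟩
  rw [h1]
  generalize upChain m R Rinv M m = X
  ext f g
  have hL : ∀ a b, liftC A (Asym m R q m) a b = algebraMap ℂ A (u a * v b) := by
    intro a b
    simp only [liftC, Matrix.map_apply, hA]
  have e2 : (liftC A (Asym m R q m) * ((∑ f : Fin m → Fin N, ∑ g : Fin m → Fin N,
      (v f * u g) • X f g) • (1 : TMat N m A))) f g
      = (u f * v g) • ∑ a, ∑ b, (v a * u b) • X a b := by
    rw [Matrix.mul_apply, Finset.sum_eq_single g]
    · rw [hL, Matrix.smul_apply, Matrix.one_apply_eq, smul_eq_mul, mul_one, Algebra.smul_def]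
    · intro b _ hb
      rw [Matrix.smul_apply, Matrix.one_apply_ne hb, smul_zero, mul_zero]
    · intro h; exact absurd (Finset.mem_univ _) h
  rw [e2, Matrix.mul_apply, Finset.sum_comm, Finset.smul_sum]
  refine Finset.sum_congr rfl fun b _ => ?_
  rw [Matrix.mul_apply, Finset.sum_mul, Finset.smul_sum]
  refine Finset.sum_congr rfl fun a _ => ?_
  rw [hL, hL, ← Algebra.commutes, ← Algebra.smul_def, ← Algebra.smul_def, smul_smul, smul_smul]
  congr 1
  ring
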